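/- If the matrices Z_{ij} are chosen as in the preceding lemma (satisfying M_i = Z_{ij} M_j with the stated block conditions and determinant normalizations), then for any indices i, j, k there exist regular functions β_{ijk,1}, …, β_{ijk,r−1} on U_i ∩ U_j ∩ U_k such that Z_{ik} − Z_{ij}Z_{jk} = (0 | B_{ijk}), where the r×2 matrix B_{ijk}, whose blocks are Q_{ik} − P_{ij}Q_{jk} − Q_{ij}S_{jk} and S_{ik} − R_{ij}Q_{jk} − S_{ij}S_{jk}, equals the product of the column vector (β_{ijk,1}, …, β̂_{ijk,t_i}, …, β_{ijk,r−1}, β_{ijk,t_i}f_i, β_{ijk,t_i}g_i)^T (the t_i-th entry omitted from the first r−2 positions and reinserted multiplied by f_i and g_i in the last two) with the row vector (g_k, −f_k). -/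

import Mathlib

/-! **Corollary 4.4 of Arrondo's "Home-made Hartshorne–Serre correspondence".**

Throughout, write the rank as `r = n + 2`, so that the `r − 1` sections are indexed by
`Fin (n + 1)` and the matrices `Mᵢ` have `r = n + 2` rows (indexed by `Fin n ⊕ Fin 2`)
and `r − 1 = n + 1` columns. All computations happen in the (commutative) ring `A` of
regular functions on `U i ∩ U j ∩ U k`, where `Y` is a codimension-two local complete
intersection subscheme of the smooth variety `X`, its ideal on `U i` is generated by
`fi, gi` (similarly for `j`, `k`), `L` is a line bundle with transition functions
`hij, hjk, hik` (units, satisfying the cocycle condition), and `si, sj, sk` are the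
normalized local representatives of the `r − 1` global sections generating
`(∧²N) ⊗ L*|_Y`, with distinguished indices `ti, tj, tk`. -/

open Matrix

/-- The `(r−1)×(r−1)` matrix `T'ᵢ`: the identity matrix except that its `t`-th column has
entries `−(−1)^t s 0, …, −(−1)^t s (r−2)`, with `1` in position `t`. -/
def Tmat {A : Type*} [CommRing A] {n : ℕ} (t : Fin (n + 1)) (s : Fin (n + 1) → A) :
    Matrix (Fin (n + 1)) (Fin (n + 1)) A :=
  Matrix.of fun a b =>
    if b = t then (if a = t then 1 else -(-1 : A) ^ (t : ℕ) * s a)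
    else if a = b then 1 else 0

/-- The `2×(r−1)` matrix `T''ᵢ`: zero except that its `t`-th column is `(f, g)ᵀ`. -/
def Tmat'' {A : Type*} [CommRing A] {n : ℕ} (t : Fin (n + 1)) (f g : A) :
    Matrix (Fin 2) (Fin (n + 1)) A :=
  Matrix.of fun a b => if b = t then ![f, g] a else 0

/-- `Δ_t`: delete the `t`-th row of a matrix with `r − 1 = n + 1` rows. -/
def deleteRow {A : Type*} {n : ℕ} {m : Type*} (t : Fin (n + 1))
    (M : Matrix (Fin (n + 1)) m A) : Matrix (Fin n) m A :=
  M.submatrix t.succAbove id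

/-- The `r×(r−1)` matrix `Mᵢ` with block form `(Δ_{tᵢ}T'ᵢ over T''ᵢ)`. -/
def Mmat {A : Type*} [CommRing A] {n : ℕ} (t : Fin (n + 1)) (s : Fin (n + 1) → A)
    (f g : A) : Matrix (Fin n ⊕ Fin 2) (Fin (n + 1)) A :=
  Matrix.fromRows (deleteRow t (Tmat t s)) (Tmat'' t f g)

/-!
Two matrices `Z`, `Z'` with `Z * Mₖ = Z' * Mₖ = Mᵢ` differ by a matrix whose rows are killed by
`Mₖ`, and the Koszul relations make every such row a multiple of `w = (0, g, -f)`. Hence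
`Z' = Z + c wᵀ`, and the matrix determinant lemma turns `det Z' = det Z` into `w · Z⁻¹ c = 0`.
Using the Koszul relations once more, `Z⁻¹ c` lies in the image of `Mₖ`, so `c` lies in the image
of `Z * Mₖ = Mᵢ`; and the vectors of that image are exactly those of the shape
`(β 0, …, β̂ t, …, β (r−2), (β t)·f, (β t)·g)`.
-/

theorem vecMulVec_sumElim_sumElim_zero {A l l' m m' : Type*} [MulZeroClass A]
    (u : l → A) (v : l' → A) (w : m' → A) :
    vecMulVec (Sum.elim u v) (Sum.elim (0 : m → A) w) =
      fromBlocks 0 (vecMulVec u w) 0 (vecMulVec v w) := by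
  ext (x | x) (y | y) <;> simp [vecMulVec_apply]

section RankOneDifference

variable {A m p : Type*} [CommRing A] [Fintype m]

theorem exists_eq_vecMulVec_of_mul_eq_zero {l : Type*} {M : Matrix m p A} {w : m → A}
    (hker : ∀ v : m → A, v ᵥ* M = 0 → ∃ c : A, v = c • w)
    {D : Matrix l m A} (hD : D * M = 0) :
    ∃ c : l → A, D = vecMulVec c w := by
  have hrow (x : l) : ∃ c : A, D x = c • w :=
    hker (D x) (by rw [← mul_apply_eq_vecMul, hD]; rfl)
  choose c hc using hrow
  exact ⟨c, funext hc⟩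

variable [DecidableEq m]

theorem det_add_vecMulVec {Z : Matrix m m A} (hZ : IsUnit Z.det) (c w : m → A) :
    (Z + vecMulVec c w).det = Z.det * (1 + w ⬝ᵥ Z⁻¹ *ᵥ c) := by
  have hfactor : Z + vecMulVec c w = Z * (1 + vecMulVec (Z⁻¹ *ᵥ c) w) := by
    rw [mul_add, mul_one, mul_vecMulVec, mulVec_mulVec, mul_nonsing_inv _ hZ, one_mulVec]
  rw [hfactor, det_mul, vecMulVec_eq Unit, det_one_add_replicateCol_mul_replicateRow]

theorem dotProduct_inv_mulVec_eq_zero_of_det_eq {Z : Matrix m m A} (hZ : IsUnit Z.det)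
    {c w : m → A} (hdet : (Z + vecMulVec c w).det = Z.det) : w ⬝ᵥ Z⁻¹ *ᵥ c = 0 := by
  rw [det_add_vecMulVec hZ] at hdet
  exact left_eq_add.mp (hZ.mul_left_cancel ((mul_one _).trans hdet.symm))

theorem exists_sub_eq_vecMulVec_mulVec [Fintype p] {M : Matrix m p A} {w : m → A}
    (hker : ∀ v : m → A, v ᵥ* M = 0 → ∃ c : A, v = c • w)
    (himage : ∀ v : m → A, w ⬝ᵥ v = 0 → ∃ ξ : p → A, M *ᵥ ξ = v)
    {Z Z' : Matrix m m A} (hZ : IsUnit Z.det) (hdet : Z'.det = Z.det) (hM : Z' * M = Z * M) :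
    ∃ ξ : p → A, Z' - Z = vecMulVec ((Z * M) *ᵥ ξ) w := by
  obtain ⟨c, hc⟩ := exists_eq_vecMulVec_of_mul_eq_zero hker (D := Z' - Z)
    (by rw [Matrix.sub_mul, hM, sub_self])
  have horth : w ⬝ᵥ Z⁻¹ *ᵥ c = 0 :=
    dotProduct_inv_mulVec_eq_zero_of_det_eq hZ (by rw [← hc, add_sub_cancel, hdet])
  obtain ⟨ξ, hξ⟩ := himage _ horth
  refine ⟨ξ, ?_⟩
  rw [← mulVec_mulVec, hξ, mulVec_mulVec, mul_nonsing_inv _ hZ, one_mulVec, hc]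

end RankOneDifference

section Koszul

variable {A : Type*} [CommRing A]

/-- The pair `(f, g)` has only the Koszul relations as syzygies, that is, the Koszul complex of
`(f, g)` is exact in the middle, as it is for a regular sequence. -/
def OnlyKoszulRelations (f g : A) : Prop :=
  ∀ a b : A, a * f + b * g = 0 → ∃ c : A, a = c * g ∧ b = -(c * f)

/-- The Koszul relation `(g, -f)` padded by zeros: under `OnlyKoszulRelations f g`, the row
vector which spans the left kernel of `Mmat t s f g` and whose own kernel is the image of that
matrix. -/
def koszulRow {l : Type*} (f g : A) : l ⊕ Fin 2 → A :=
  Sum.elim 0 ![g, -f]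

end Koszul

section Mmat

variable {A : Type*} [CommRing A] {n : ℕ} (t : Fin (n + 1)) (s : Fin (n + 1) → A) (f g : A)

theorem Tmat_mulVec_self (ξ : Fin (n + 1) → A) : (Tmat t s *ᵥ ξ) t = ξ t := by
  simp [Tmat, mulVec, dotProduct, Fin.sum_univ_succAbove _ t, Fin.ne_succAbove]

theorem Tmat_mulVec_succAbove (ξ : Fin (n + 1) → A) (a : Fin n) :
    (Tmat t s *ᵥ ξ) (t.succAbove a) =
      ξ (t.succAbove a) - (-1) ^ (t : ℕ) * s (t.succAbove a) * ξ t := by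
  simp [Tmat, mulVec, dotProduct, Fin.sum_univ_succAbove _ t, Fin.succAbove_ne,
    sub_eq_add_neg, add_comm]

theorem Tmat_mulVec_surjective : Function.Surjective (Tmat t s *ᵥ ·) := by
  intro β
  refine ⟨t.insertNth (β t)
    fun a => β (t.succAbove a) + (-1) ^ (t : ℕ) * s (t.succAbove a) * β t, ?_⟩
  refine funext ((Fin.forall_iff_succAbove t).mpr ⟨?_, fun a => ?_⟩)
  · simp [Tmat_mulVec_self]
  · simp [Tmat_mulVec_succAbove]

theorem Mmat_mulVec (ξ : Fin (n + 1) → A) :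
    Mmat t s f g *ᵥ ξ =
      Sum.elim (fun a => (Tmat t s *ᵥ ξ) (t.succAbove a))
        ![(Tmat t s *ᵥ ξ) t * f, (Tmat t s *ᵥ ξ) t * g] := by
  rw [Tmat_mulVec_self, Mmat, fromRows_mulVec]
  congr 1
  ext a
  fin_cases a <;> simp [Tmat'', mulVec, dotProduct, mul_comm]

theorem vecMul_Mmat_succAbove (v : Fin n ⊕ Fin 2 → A) (a : Fin n) :
    (v ᵥ* Mmat t s f g) (t.succAbove a) = v (Sum.inl a) := by
  simp [Mmat, deleteRow, Tmat, Tmat'', vecMul, dotProduct, Fin.succAbove_ne]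

theorem vecMul_Mmat_self {v : Fin n ⊕ Fin 2 → A} (hv : ∀ a, v (Sum.inl a) = 0) :
    (v ᵥ* Mmat t s f g) t = v (Sum.inr 0) * f + v (Sum.inr 1) * g := by
  simp [Mmat, Tmat'', vecMul, dotProduct, hv]

variable {f g}

theorem exists_eq_smul_koszulRow_of_vecMul_Mmat_eq_zero (hfg : OnlyKoszulRelations f g)
    {v : Fin n ⊕ Fin 2 → A} (hv : v ᵥ* Mmat t s f g = 0) :
    ∃ c : A, v = c • koszulRow f g := by
  have hinl (a : Fin n) : v (Sum.inl a) = 0 := by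
    rw [← vecMul_Mmat_succAbove t s f g v, hv, Pi.zero_apply]
  have hrelation : v (Sum.inr 0) * f + v (Sum.inr 1) * g = 0 := by
    rw [← vecMul_Mmat_self t s f g hinl, hv, Pi.zero_apply]
  obtain ⟨c, hc₀, hc₁⟩ := hfg _ _ hrelation
  refine ⟨c, ?_⟩
  ext (a | a)
  · simp [koszulRow, hinl]
  · fin_cases a <;> simp [koszulRow, hc₀, hc₁]

theorem exists_Mmat_mulVec_eq_of_koszulRow_dotProduct_eq_zero (hfg : OnlyKoszulRelations f g)
    {v : Fin n ⊕ Fin 2 → A} (hv : koszulRow f g ⬝ᵥ v = 0) :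
    ∃ ξ : Fin (n + 1) → A, Mmat t s f g *ᵥ ξ = v := by
  have hrelation : v (Sum.inr 1) * f + -v (Sum.inr 0) * g = 0 := by
    have hdot : g * v (Sum.inr 0) + -(f * v (Sum.inr 1)) = 0 := by
      simpa [koszulRow, dotProduct] using hv
    linear_combination -hdot
  obtain ⟨c, hc₁, hc₀⟩ := hfg _ _ hrelation
  obtain ⟨ξ, hξ : Tmat t s *ᵥ ξ = _⟩ :=
    Tmat_mulVec_surjective t s (t.insertNth c fun a => v (Sum.inl a))
  refine ⟨ξ, ?_⟩
  rw [Mmat_mulVec, hξ]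
  ext (a | a)
  · simp
  · fin_cases a <;> simp [hc₁, neg_inj.mp hc₀]

theorem exists_sub_eq_vecMulVec_koszulRow {ti tk : Fin (n + 1)} {si sk : Fin (n + 1) → A}
    {fi gi fk gk : A} (hfg : OnlyKoszulRelations fk gk)
    {Z Z' : Matrix (Fin n ⊕ Fin 2) (Fin n ⊕ Fin 2) A} (hZ : IsUnit Z.det)
    (hdet : Z'.det = Z.det) (hM : Mmat ti si fi gi = Z * Mmat tk sk fk gk)
    (hM' : Mmat ti si fi gi = Z' * Mmat tk sk fk gk) :
    ∃ β : Fin (n + 1) → A, Z' - Z =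
      vecMulVec (Sum.elim (fun a => β (ti.succAbove a)) ![β ti * fi, β ti * gi])
        (koszulRow fk gk) := by
  obtain ⟨ξ, hξ⟩ := exists_sub_eq_vecMulVec_mulVec
    (fun _ => exists_eq_smul_koszulRow_of_vecMul_Mmat_eq_zero tk sk hfg)
    (fun _ => exists_Mmat_mulVec_eq_of_koszulRow_dotProduct_eq_zero tk sk hfg)
    hZ hdet (hM'.symm.trans hM)
  exact ⟨Tmat ti si *ᵥ ξ, by rw [hξ, ← hM, Mmat_mulVec]⟩

end Mmat

/-- If the matrices `Z_{ij} = ((P_{ij}, Q_{ij}), (R_{ij}, S_{ij}))` are chosen as in the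
preceding lemma (satisfying `Mᵢ = Z_{ij} Mⱼ` with the determinant normalizations
`det Z_{ij} = h_{ij}` and `det S_{ij} = (−1)^{tᵢ} s_{j,tᵢ} h_{ij}`), then for any indices
`i, j, k` there exist regular functions `β 0, …, β (r−2)` on `U i ∩ U j ∩ U k` such that
`Z_{ik} − Z_{ij} Z_{jk} = (0 | B_{ijk})`, where the `r×2` matrix `B_{ijk}` (with blocks
`Q_{ik} − P_{ij}Q_{jk} − Q_{ij}S_{jk}` and `S_{ik} − R_{ij}Q_{jk} − S_{ij}S_{jk}`) equals
the product of the column vector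
`(β 0, …, β̂ tᵢ, …, β (r−2), (β tᵢ)·fᵢ, (β tᵢ)·gᵢ)ᵀ` with the row vector `(g_k, −f_k)`. -/
theorem stmt18 {A : Type*} [CommRing A] {n : ℕ}
    (fi gi fj gj fk gk : A)
    (si sj sk : Fin (n + 1) → A) (ti tj tk : Fin (n + 1))
    (hij hjk hik : A)
    (hUnitij : IsUnit hij) (hUnitjk : IsUnit hjk) (hUnitik : IsUnit hik)
    (hcocycle : hik = hij * hjk)
    (hnormi : si ti = (-1 : A) ^ (ti : ℕ)) (hnormj : sj tj = (-1 : A) ^ (tj : ℕ))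
    (hnormk : sk tk = (-1 : A) ^ (tk : ℕ))
    -- (fk, gk) is a regular sequence cutting out Y (Koszul relations only):
    (hreg : ∀ a b : A, a * fk + b * gk = 0 → ∃ c : A, a = c * gk ∧ b = -(c * fk))
    (Pij : Matrix (Fin n) (Fin n) A) (Qij : Matrix (Fin n) (Fin 2) A)
    (Rij : Matrix (Fin 2) (Fin n) A) (Sij : Matrix (Fin 2) (Fin 2) A)
    (Pjk : Matrix (Fin n) (Fin n) A) (Qjk : Matrix (Fin n) (Fin 2) A)
    (Rjk : Matrix (Fin 2) (Fin n) A) (Sjk : Matrix (Fin 2) (Fin 2) A)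
    (Pik : Matrix (Fin n) (Fin n) A) (Qik : Matrix (Fin n) (Fin 2) A)
    (Rik : Matrix (Fin 2) (Fin n) A) (Sik : Matrix (Fin 2) (Fin 2) A)
    (hMij : Mmat ti si fi gi = Matrix.fromBlocks Pij Qij Rij Sij * Mmat tj sj fj gj)
    (hMjk : Mmat tj sj fj gj = Matrix.fromBlocks Pjk Qjk Rjk Sjk * Mmat tk sk fk gk)
    (hMik : Mmat ti si fi gi = Matrix.fromBlocks Pik Qik Rik Sik * Mmat tk sk fk gk)
    (hdetZij : (Matrix.fromBlocks Pij Qij Rij Sij).det = hij)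
    (hdetZjk : (Matrix.fromBlocks Pjk Qjk Rjk Sjk).det = hjk)
    (hdetZik : (Matrix.fromBlocks Pik Qik Rik Sik).det = hik)
    (hdetSij : Sij.det = (-1 : A) ^ (ti : ℕ) * sj ti * hij)
    (hdetSjk : Sjk.det = (-1 : A) ^ (tj : ℕ) * sk tj * hjk)
    (hdetSik : Sik.det = (-1 : A) ^ (ti : ℕ) * sk ti * hik) :
    ∃ β : Fin (n + 1) → A,
      Matrix.fromBlocks Pik Qik Rik Sik -
        Matrix.fromBlocks Pij Qij Rij Sij * Matrix.fromBlocks Pjk Qjk Rjk Sjk =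
      Matrix.fromBlocks 0
        (Matrix.vecMulVec (fun a : Fin n => β (ti.succAbove a)) ![gk, -fk])
        0
        (Matrix.vecMulVec ![β ti * fi, β ti * gi] ![gk, -fk]) := by
  set Zij := fromBlocks Pij Qij Rij Sij
  set Zjk := fromBlocks Pjk Qjk Rjk Sjk
  have hdet : (Zij * Zjk).det = hik := by rw [det_mul, hdetZij, hdetZjk, hcocycle]
  have hM : Mmat ti si fi gi = Zij * Zjk * Mmat tk sk fk gk := by
    rw [hMij, hMjk, Matrix.mul_assoc]
  obtain ⟨β, hβ⟩ := exists_sub_eq_vecMulVec_koszulRow hreg (hdet ▸ hUnitik)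
    (hdetZik.trans hdet.symm) hM hMik
  exact ⟨β, by rw [hβ, koszulRow, vecMulVec_sumElim_sumElim_zero]⟩
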